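/- arXiv:1311.6624 — 2 statements merged into one kernel-verified Lean document; each statement's English description precedes it below -/
import Mathlib

section
/- Let n ≥ 2 and let L(D) be a cocanceling homogeneous linear differential operator from E to F on ℝⁿ (i.e. the intersection over nonzero ξ of ker L(ξ) is {0}). If f ∈ L¹(ℝⁿ; E) is integrable, compactly supported, and satisfies L(D) f = 0 in the sense of distributions, then ∫_{ℝⁿ} f = 0. -/
open MeasureTheory

/-!
Testing `L(D) f = 0` against the dilates `x ↦ φ (a x)` of a test function `φ`, and dividing by
`a ^ k`, replaces the weights `∂^α φ(x)` in the equation by `∂^α φ(a x)`. As `a → 0`, dominated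
convergence turns these into the constants `∂^α φ(0)`. If `φ` agrees near the origin with the
polynomial `x ↦ ξ(x) ^ k` for a linear functional `ξ`, then `∂^α φ(0) = k! ξ^α`, so what remains is
`k! L(ξ) (∫ f) = 0`. Hence `∫ f` lies in the kernel of every `L(ξ)`.
-/

section

open Filter Topology
open scoped ContDiff

theorem iteratedFDeriv_clm_pow_apply {𝕜 V : Type*} [NontriviallyNormedField 𝕜]
    [NormedAddCommGroup V] [NormedSpace 𝕜 V] (ξ : StrongDual 𝕜 V) (k : ℕ) (x : V)
    (v : Fin k → V) :
    iteratedFDeriv 𝕜 k (fun y => ξ y ^ k) x v = k.factorial * ∏ i, ξ (v i) := by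
  have hpow : ContDiff 𝕜 k (fun t : 𝕜 => t ^ k) := contDiff_id.pow k
  have hcomp : (fun y => ξ y ^ k) = (fun t : 𝕜 => t ^ k) ∘ ξ := rfl
  rw [hcomp, ξ.iteratedFDeriv_comp_right hpow x le_rfl,
    ContinuousMultilinearMap.compContinuousLinearMap_apply,
    iteratedFDeriv_apply_eq_iteratedDeriv_mul_prod, iteratedDeriv_pow, Nat.descFactorial_self,
    Nat.sub_self, pow_zero, mul_one, smul_eq_mul, mul_comm]

theorem exists_hasCompactSupport_eventuallyEq_of_contDiff {V G : Type*} [NormedAddCommGroup V]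
    [NormedSpace ℝ V] [FiniteDimensional ℝ V] [NormedAddCommGroup G] [NormedSpace ℝ G]
    {g : V → G} (hg : ContDiff ℝ ∞ g) (x : V) :
    ∃ φ : V → G, ContDiff ℝ ∞ φ ∧ HasCompactSupport φ ∧ φ =ᶠ[𝓝 x] g := by
  let b : ContDiffBump x := default
  refine ⟨fun y => b y • g y, b.contDiff.smul hg, b.hasCompactSupport.smul_right, ?_⟩
  filter_upwards [b.eventuallyEq_one] with y hy
  rw [hy, Pi.one_apply, one_smul]

theorem tendsto_integral_comp_smul_smul {V H : Type*} [TopologicalSpace V] [AddCommGroup V]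
    [Module ℝ V] [ContinuousSMul ℝ V] [MeasurableSpace V] [OpensMeasurableSpace V]
    [NormedAddCommGroup H] [NormedSpace ℝ H] {μ : Measure V} {g : V → ℝ} {C : ℝ} {h : V → H}
    (hg : Continuous g) (hC : ∀ x, ‖g x‖ ≤ C) (hh : Integrable h μ) :
    Tendsto (fun a : ℝ => ∫ x, g (a • x) • h x ∂μ) (𝓝 0) (𝓝 (g 0 • ∫ x, h x ∂μ)) := by
  rw [← integral_smul]
  refine tendsto_integral_filter_of_dominated_convergence (fun x => C * ‖h x‖)
    (.of_forall fun a => ?_) (.of_forall fun a => .of_forall fun x => ?_)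
    (hh.norm.const_mul C) (.of_forall fun x => ?_)
  · exact (hg.comp (continuous_const_smul a)).aestronglyMeasurable.smul hh.aestronglyMeasurable
  · rw [norm_smul]
    exact mul_le_mul_of_nonneg_right (hC _) (norm_nonneg _)
  · have hcont : Continuous fun a : ℝ => g (a • x) • h x := by fun_prop
    simpa only [zero_smul] using hcont.tendsto 0

/-- A homogeneous linear differential operator `L(D)` of order `k` with constant coefficients, from
`E`-valued to `F`-valued functions on `V`, presented as a finite sum
`∑ j, coeff j ∂_{dir j 0} ⋯ ∂_{dir j (k - 1)}` of iterated directional derivatives. The presentation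
needs neither a basis of `V` nor uniqueness of the coefficients. -/
structure HomogeneousDiffOp (ι : Type*) (k : ℕ) (V E F : Type*) [AddCommGroup E] [Module ℝ E]
    [TopologicalSpace E] [AddCommGroup F] [Module ℝ F] [TopologicalSpace F] where
  dir : ι → Fin k → V
  coeff : ι → E →L[ℝ] F

namespace HomogeneousDiffOp

section Symbol

variable {ι : Type*} [Fintype ι] {k : ℕ} {V E F : Type*} [AddCommGroup V] [Module ℝ V]
  [AddCommGroup E] [Module ℝ E] [TopologicalSpace E] [AddCommGroup F] [Module ℝ F]
  [TopologicalSpace F] [ContinuousAdd F] [ContinuousConstSMul ℝ F]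

/-- The symbol `L(ξ)`. The frequency `ξ` is a linear functional on `V`, so that no inner product
is needed. -/
def symbol (A : HomogeneousDiffOp ι k V E F) (ξ : Module.Dual ℝ V) : E →L[ℝ] F :=
  ∑ j, (∏ i, ξ (A.dir j i)) • A.coeff j

/-- Cocancellation: the kernels of the symbols at nonzero frequencies meet only in `0`. -/
def IsCocanceling (A : HomogeneousDiffOp ι k V E F) : Prop :=
  ⨅ ξ ∈ {ξ : Module.Dual ℝ V | ξ ≠ 0}, LinearMap.ker (A.symbol ξ : E →ₗ[ℝ] F) = ⊥

end Symbol

section Coordinates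

variable {k : ℕ} {κ : Type*} [DecidableEq κ] {E F : Type*} [AddCommGroup E] [Module ℝ E]
  [TopologicalSpace E] [AddCommGroup F] [Module ℝ F] [TopologicalSpace F]

/-- The operator `∑ m, c m ∂_{m 0} ⋯ ∂_{m (k - 1)}` on `ℝ^κ`, written with partial derivatives. -/
def ofCoord (c : (Fin k → κ) → E →L[ℝ] F) : HomogeneousDiffOp (Fin k → κ) k (κ → ℝ) E F where
  dir m i := Pi.single (m i) 1
  coeff := c

variable [Fintype κ] [ContinuousAdd F] [ContinuousConstSMul ℝ F]

theorem symbol_ofCoord_dotProduct (c : (Fin k → κ) → E →L[ℝ] F) (ξ : κ → ℝ) :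
    (ofCoord c).symbol (dotProductEquiv ℝ κ ξ) = ∑ m, (∏ i, ξ (m i)) • c m := by
  simp only [symbol, ofCoord, dotProductEquiv_apply_apply, dotProduct_single_one]

theorem isCocanceling_ofCoord_iff {c : (Fin k → κ) → E →L[ℝ] F} :
    (ofCoord c).IsCocanceling ↔
      ⨅ ξ ∈ {ξ : κ → ℝ | ξ ≠ 0},
        LinearMap.ker (∑ m, (∏ i, ξ (m i)) • c m : E →L[ℝ] F).toLinearMap = ⊥ := by
  simp only [IsCocanceling, ← symbol_ofCoord_dotProduct, Set.mem_ofPred_eq,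
    ← (dotProductEquiv ℝ κ).surjective.iInf_comp, ne_eq, EmbeddingLike.map_eq_zero_iff]

end Coordinates

section WeakEquation

variable {ι : Type*} [Fintype ι] {k : ℕ} {V E F : Type*} [NormedAddCommGroup V] [NormedSpace ℝ V]
  [MeasurableSpace V] [NormedAddCommGroup E] [NormedSpace ℝ E] [AddCommGroup F] [Module ℝ F]
  [TopologicalSpace F] {A : HomogeneousDiffOp ι k V E F} {μ : Measure V} {f : V → E}

/-- `L(D) (f μ) = 0` in the sense of distributions. Test functions with values in the dual of `F`
are replaced by products of a scalar test function `φ` and a functional `w`, and the sign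
`(-1) ^ k` of the formal adjoint is dropped. -/
def WeaklyAnnihilates (A : HomogeneousDiffOp ι k V E F) (μ : Measure V) (f : V → E) : Prop :=
  ∀ φ : V → ℝ, ContDiff ℝ ∞ φ → HasCompactSupport φ → ∀ w : StrongDual ℝ F,
    ∑ j, ∫ x, iteratedFDeriv ℝ k φ x (A.dir j) * w (A.coeff j (f x)) ∂μ = 0

theorem WeaklyAnnihilates.sum_integral_iteratedFDeriv_smul (hAf : A.WeaklyAnnihilates μ f)
    {φ : V → ℝ} (hφ : ContDiff ℝ ∞ φ) (hφc : HasCompactSupport φ) (w : StrongDual ℝ F) {a : ℝ}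
    (ha : a ≠ 0) :
    ∑ j, ∫ x, iteratedFDeriv ℝ k φ (a • x) (A.dir j) * w (A.coeff j (f x)) ∂μ = 0 := by
  have hdilate := hAf (fun x => φ (a • x)) (hφ.comp (contDiff_const_smul a)) (hφc.comp_smul ha) w
  have hφk : ContDiff ℝ k φ := hφ.of_le (mod_cast le_top)
  simp only [iteratedFDeriv_comp_const_smul a hφk, smul_apply, smul_eq_mul, mul_assoc,
    integral_const_mul, ← Finset.mul_sum] at hdilate
  exact (mul_eq_zero.mp hdilate).resolve_left (pow_ne_zero k ha)

variable [OpensMeasurableSpace V] [CompleteSpace E]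

theorem WeaklyAnnihilates.sum_iteratedFDeriv_zero (hAf : A.WeaklyAnnihilates μ f)
    (hf : Integrable f μ) {φ : V → ℝ} (hφ : ContDiff ℝ ∞ φ) (hφc : HasCompactSupport φ)
    (w : StrongDual ℝ F) :
    ∑ j, iteratedFDeriv ℝ k φ 0 (A.dir j) * w (A.coeff j (∫ x, f x ∂μ)) = 0 := by
  have hcont : Continuous (iteratedFDeriv ℝ k φ) :=
    hφ.continuous_iteratedFDeriv (mod_cast le_top)
  obtain ⟨C, hC⟩ := hcont.bounded_above_of_compact_support (hφc.iteratedFDeriv k)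
  have hterm (j : ι) : Tendsto
      (fun a : ℝ => ∫ x, iteratedFDeriv ℝ k φ (a • x) (A.dir j) * w (A.coeff j (f x)) ∂μ)
      (𝓝 0) (𝓝 (iteratedFDeriv ℝ k φ 0 (A.dir j) * w (A.coeff j (∫ x, f x ∂μ)))) := by
    let u : StrongDual ℝ E := w ∘L A.coeff j
    have hbound (x : V) : ‖iteratedFDeriv ℝ k φ x (A.dir j)‖ ≤ C * ∏ i, ‖A.dir j i‖ :=
      ContinuousMultilinearMap.le_of_opNorm_le (hC x) _
    have hlim := tendsto_integral_comp_smul_smul (hcont.eval_const (A.dir j)) hbound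
      (u.integrable_comp hf)
    rwa [u.integral_comp_comm hf] at hlim
  have hsum := (tendsto_finsetSum Finset.univ fun j _ => hterm j).mono_left
    (nhdsWithin_le_nhds (s := {0}ᶜ))
  refine tendsto_nhds_unique (hsum.congr' ?_) tendsto_const_nhds
  filter_upwards [self_mem_nhdsWithin] with a ha
  exact hAf.sum_integral_iteratedFDeriv_smul hφ hφc w ha

theorem WeaklyAnnihilates.symbol_integral_eq_zero [FiniteDimensional ℝ V] [ContinuousAdd F]
    [ContinuousConstSMul ℝ F] [SeparatingDual ℝ F] (hAf : A.WeaklyAnnihilates μ f)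
    (hf : Integrable f μ) (ξ : Module.Dual ℝ V) : A.symbol ξ (∫ x, f x ∂μ) = 0 := by
  refine SeparatingDual.eq_zero_of_forall_dual_eq_zero (R := ℝ) fun w => ?_
  let ξ' : StrongDual ℝ V := ξ.toContinuousLinearMap
  obtain ⟨φ, hφ, hφc, hφξ⟩ :=
    exists_hasCompactSupport_eventuallyEq_of_contDiff (ξ'.contDiff.pow k) (0 : V)
  have hderiv (j : ι) : iteratedFDeriv ℝ k φ 0 (A.dir j) = k.factorial * ∏ i, ξ (A.dir j i) := by
    rw [(hφξ.iteratedFDeriv ℝ k).eq_of_nhds]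
    exact iteratedFDeriv_clm_pow_apply ξ' k 0 (A.dir j)
  have hsum := hAf.sum_iteratedFDeriv_zero hf hφ hφc w
  simp only [hderiv, mul_assoc, ← Finset.mul_sum] at hsum
  have hk : (k.factorial : ℝ) ≠ 0 := mod_cast k.factorial_ne_zero
  simpa only [symbol, sum_apply, smul_apply, map_sum, map_smul, smul_eq_mul] using
    (mul_eq_zero.mp hsum).resolve_left hk

end WeakEquation

end HomogeneousDiffOp

theorem stmt2_general {ι : Type*} [Fintype ι] {k : ℕ} {V E F : Type*}
    [NormedAddCommGroup V] [NormedSpace ℝ V] [FiniteDimensional ℝ V]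
    [MeasurableSpace V] [OpensMeasurableSpace V]
    [NormedAddCommGroup E] [NormedSpace ℝ E] [CompleteSpace E]
    [AddCommGroup F] [Module ℝ F] [TopologicalSpace F] [ContinuousAdd F]
    [ContinuousConstSMul ℝ F] [SeparatingDual ℝ F]
    {A : HomogeneousDiffOp ι k V E F} {μ : Measure V} {f : V → E}
    (hA : A.IsCocanceling) (hf : Integrable f μ) (hAf : A.WeaklyAnnihilates μ f) :
    ∫ x, f x ∂μ = 0 := by
  rw [← Submodule.mem_bot ℝ, ← hA]
  simp only [Submodule.mem_iInf, LinearMap.mem_ker]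
  exact fun ξ _ => hAf.symbol_integral_eq_zero hf ξ

end

/-- If `L(D)` is a cocanceling homogeneous linear differential operator of
order `k` from `E` to `F` on `ℝⁿ` (`n ≥ 2`), given by constant coefficients
`c m ∈ Hom(E, F)` indexed by tuples of directions `m : Fin k → Fin n`, with symbol
`L(ξ) = ∑ₘ (∏ᵢ ξ_{m i}) c m` satisfying `⋂_{ξ ≠ 0} ker L(ξ) = {0}`, and if
`f ∈ L¹(ℝⁿ; E)` is compactly supported and satisfies `L(D) f = 0` in the sense of
distributions, then `∫_{ℝⁿ} f = 0`. -/
theorem stmt2 (n k : ℕ) (hn : 2 ≤ n) {E F : Type*}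
    [NormedAddCommGroup E] [NormedSpace ℝ E] [FiniteDimensional ℝ E]
    [NormedAddCommGroup F] [NormedSpace ℝ F] [FiniteDimensional ℝ F]
    (c : (Fin k → Fin n) → (E →ₗ[ℝ] F))
    (L : (Fin n → ℝ) → (E →ₗ[ℝ] F))
    (hL : ∀ ξ, L ξ = ∑ m : Fin k → Fin n, (∏ i, ξ (m i)) • c m)
    (hcoc : (⨅ ξ ∈ {ξ : Fin n → ℝ | ξ ≠ 0}, LinearMap.ker (L ξ)) = ⊥)
    (f : (Fin n → ℝ) → E) (hf : Integrable f volume) (hsupp : HasCompactSupport f)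
    (hLf : ∀ φ : (Fin n → ℝ) → ℝ, ContDiff ℝ (⊤ : ℕ∞) φ → HasCompactSupport φ →
      ∀ w : Module.Dual ℝ F,
        ∑ m : Fin k → Fin n,
          ∫ x, iteratedFDeriv ℝ k φ x (fun i => Pi.single (m i) (1 : ℝ)) *
            w (c m (f x)) = 0) :
    ∫ x, f x = 0 := by
  have hA : (HomogeneousDiffOp.ofCoord fun m => (c m).toContinuousLinearMap).IsCocanceling := by
    simpa [HomogeneousDiffOp.isCocanceling_ofCoord_iff, hL] using hcoc
  exact stmt2_general hA hf fun φ hφ hφc w => hLf φ hφ hφc w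
end

section
/- Let n ≥ 2. There exists C > 0 such that for every f ∈ C_c^∞(ℝⁿ; ℝⁿ) with div f = 0 and every φ ∈ C_c^∞(ℝⁿ; ℝⁿ), one has |∫_{ℝⁿ} f · φ| ≤ C ‖f‖_{L¹(ℝⁿ)} ‖Dφ‖_{Lⁿ(ℝⁿ)}. -/
open MeasureTheory

/-! Slice `ℝⁿ` by the hyperplanes `xᵢ = t`. Since `div f = 0`, the divergence theorem on the
half-space `xᵢ ≤ t` converts the integral of `fᵢ χ` over a slice into an integral of `f · Dχ` over
the half-space, hence bounds it by `Lip χ * ‖f‖₁` for every `χ` depending only on the other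
variables. The restriction of `φᵢ` to the slice is only controlled in `W^{1,n}(ℝⁿ⁻¹)`, but by
Morrey's inequality its average at scale `ε` approximates it up to a multiple of
`ε ^ (1/n) * ‖Dφ‖ₙ` and has Lipschitz constant at most `ε ^ (1/n - 1) * ‖Dφ‖ₙ`, the norms of `Dφ`
being taken on the slice. Optimising in `ε` bounds the slice integral by a multiple of
`‖f‖₁ ^ (1/n) * ‖f(t, ·)‖₁ ^ (1 - 1/n) * ‖Dφ(t, ·)‖ₙ`, and Hölder's inequality in `t` concludes. -/

section RealInequalities

variable {α : Type*} [MeasurableSpace α] {μ : Measure α} {a b : α → ℝ} {θ : ℝ}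

lemma integrable_rpow_mul_rpow (ha : Integrable a μ) (hb : Integrable b μ) (ha0 : 0 ≤ a)
    (hb0 : 0 ≤ b) (hθ0 : 0 ≤ θ) (hθ1 : θ ≤ 1) :
    Integrable (fun x ↦ a x ^ (1 - θ) * b x ^ θ) μ := by
  refine ((ha.const_mul (1 - θ)).add (hb.const_mul θ)).mono'
    ((ha.aemeasurable.pow_const _).mul (hb.aemeasurable.pow_const _)).aestronglyMeasurable
    (.of_forall fun x ↦ ?_)
  rw [Real.norm_of_nonneg
    (mul_nonneg (Real.rpow_nonneg (ha0 x) _) (Real.rpow_nonneg (hb0 x) _))]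
  exact Real.geom_mean_le_arith_mean2_weighted (sub_nonneg.2 hθ1) hθ0 (ha0 x) (hb0 x)
    (sub_add_cancel 1 θ)

lemma integral_rpow_mul_rpow_le (ha : Integrable a μ) (hb : Integrable b μ) (ha0 : 0 ≤ a)
    (hb0 : 0 ≤ b) (hθ0 : 0 ≤ θ) (hθ1 : θ ≤ 1) :
    ∫ x, a x ^ (1 - θ) * b x ^ θ ∂μ ≤ (∫ x, a x ∂μ) ^ (1 - θ) * (∫ x, b x ∂μ) ^ θ := by
  have hθ1' : 0 ≤ 1 - θ := sub_nonneg.2 hθ1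
  have hI : 0 ≤ (∫ x, a x ∂μ) ^ (1 - θ) * (∫ x, b x ∂μ) ^ θ :=
    mul_nonneg (Real.rpow_nonneg (integral_nonneg ha0) _) (Real.rpow_nonneg (integral_nonneg hb0) _)
  have hab : 0 ≤ fun x ↦ a x ^ (1 - θ) * b x ^ θ := fun x ↦
    mul_nonneg (Real.rpow_nonneg (ha0 x) _) (Real.rpow_nonneg (hb0 x) _)
  rw [← ENNReal.ofReal_le_ofReal_iff hI, ofReal_integral_eq_lintegral_ofReal
    (integrable_rpow_mul_rpow ha hb ha0 hb0 hθ0 hθ1) (.of_forall hab),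
    ENNReal.ofReal_mul (Real.rpow_nonneg (integral_nonneg ha0) _),
    ← ENNReal.ofReal_rpow_of_nonneg (integral_nonneg ha0) hθ1',
    ← ENNReal.ofReal_rpow_of_nonneg (integral_nonneg hb0) hθ0,
    ofReal_integral_eq_lintegral_ofReal ha (.of_forall ha0),
    ofReal_integral_eq_lintegral_ofReal hb (.of_forall hb0)]
  calc ∫⁻ x, ENNReal.ofReal (a x ^ (1 - θ) * b x ^ θ) ∂μ
      = ∫⁻ x, ENNReal.ofReal (a x) ^ (1 - θ) * ENNReal.ofReal (b x) ^ θ ∂μ := by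
        refine lintegral_congr fun x ↦ ?_
        rw [ENNReal.ofReal_mul (Real.rpow_nonneg (ha0 x) _),
          ENNReal.ofReal_rpow_of_nonneg (ha0 x) hθ1', ENNReal.ofReal_rpow_of_nonneg (hb0 x) hθ0]
    _ ≤ _ := ENNReal.lintegral_mul_norm_pow_le ha.aemeasurable.ennreal_ofReal
        hb.aemeasurable.ennreal_ofReal hθ1' hθ0 (sub_add_cancel 1 θ)

lemma le_rpow_mul_rpow_of_forall_le {X a b c d : ℝ} (ha : 0 ≤ a) (hb : 0 ≤ b) (hc : 0 ≤ c)
    (hd : 0 ≤ d) (hθ0 : 0 ≤ θ) (hθ1 : θ ≤ 1)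
    (h : ∀ ε, 0 < ε → X ≤ c * (a * ε ^ θ) + d * (b * ε ^ (θ - 1))) :
    X ≤ (c + d) * (a ^ (1 - θ) * b ^ θ) := by
  have hpos : ∀ δ, 0 < δ → X ≤ (c + d) * ((a + δ) ^ (1 - θ) * (b + δ) ^ θ) := by
    intro δ hδ
    have haδ : 0 < a + δ := by positivity
    have hbδ : 0 < b + δ := by positivity
    -- This `ε` balances the two terms of `h`, with `a` and `b` perturbed to be positive.
    have hε : 0 < (b + δ) / (a + δ) := by positivity
    calc X ≤ c * ((a + δ) * ((b + δ) / (a + δ)) ^ θ) +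
          d * ((b + δ) * ((b + δ) / (a + δ)) ^ (θ - 1)) := by
          refine (h _ hε).trans ?_
          gcongr <;> linarith
      _ = _ := by
          rw [Real.rpow_sub_one hε.ne', Real.div_rpow hbδ.le haδ.le, Real.rpow_sub haδ,
            Real.rpow_one]
          field_simp
  have hcont : Continuous fun δ : ℝ ↦ (c + d) * ((a + δ) ^ (1 - θ) * (b + δ) ^ θ) :=
    continuous_const.mul
      (((Real.continuous_rpow_const (sub_nonneg.2 hθ1)).comp (by fun_prop)).mul
        ((Real.continuous_rpow_const hθ0).comp (by fun_prop)))
  have hlim := (hcont.tendsto 0).mono_left (nhdsWithin_le_nhds (s := Set.Ioi 0))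
  simp only [add_zero] at hlim
  exact ge_of_tendsto hlim (eventually_nhdsWithin_of_forall hpos)

end RealInequalities

section FDerivRpow

variable {E F : Type*} [NormedAddCommGroup E] [NormedSpace ℝ E] [NormedAddCommGroup F]
  [NormedSpace ℝ F] {ψ : E → F} {p : ℝ}

lemma continuous_norm_fderiv_rpow (hψ : ContDiff ℝ 1 ψ) (hp : 0 ≤ p) :
    Continuous fun y ↦ ‖fderiv ℝ ψ y‖ ^ p :=
  (hψ.continuous_fderiv one_ne_zero).norm.rpow_const fun _ ↦ .inr hp

lemma hasCompactSupport_norm_fderiv_rpow (hψc : HasCompactSupport ψ) (hp : p ≠ 0) :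
    HasCompactSupport fun y ↦ ‖fderiv ℝ ψ y‖ ^ p :=
  (hψc.fderiv ℝ).comp_left (g := fun L : E →L[ℝ] F ↦ ‖L‖ ^ p) (by simp [hp])

lemma integrable_norm_fderiv_rpow [MeasurableSpace E] [BorelSpace E] {μ : Measure E}
    [IsFiniteMeasureOnCompacts μ] (hψ : ContDiff ℝ 1 ψ) (hψc : HasCompactSupport ψ) (hp : 0 < p) :
    Integrable (fun y ↦ ‖fderiv ℝ ψ y‖ ^ p) μ :=
  (continuous_norm_fderiv_rpow hψ hp.le).integrable_of_hasCompactSupport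
    (hasCompactSupport_norm_fderiv_rpow hψc hp.ne')

end FDerivRpow

lemma integrable_comp_add_smul {E F : Type*} [NormedAddCommGroup E] [NormedSpace ℝ E]
    [MeasurableSpace E] [BorelSpace E] [SecondCountableTopology E] [NormedAddCommGroup F]
    {ν : Measure E} [IsFiniteMeasure ν] {g : E → F} (hg : Continuous g)
    (hgc : HasCompactSupport g) (s : ℝ) (x : E) : Integrable (fun z ↦ g (x + s • z)) ν := by
  obtain ⟨M, hM⟩ := hgc.exists_bound_of_continuous hg
  exact .of_bound (hg.comp (by fun_prop)).aestronglyMeasurable M (.of_forall fun z ↦ hM _)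

section DilateAverage

variable {E F : Type*} [NormedAddCommGroup E] [NormedSpace ℝ E] [MeasurableSpace E]
  [NormedAddCommGroup F] [NormedSpace ℝ F]

/-- The average of `ψ` at scale `s` with weight `ν`. It serves as a regularisation of `ψ`, but `ν`
is an arbitrary measure rather than a smooth kernel, since the derivative is put on `ψ`. -/
noncomputable def dilateAverage (ν : Measure E) (ψ : E → F) (s : ℝ) (x : E) : F :=
  ∫ z, ψ (x + s • z) ∂ν

variable [FiniteDimensional ℝ E] [BorelSpace E] {μ ν : Measure E} [μ.IsAddHaarMeasure]
  {ψ : E → F} {p s : ℝ}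

lemma integral_comp_add_smul_le [IsProbabilityMeasure ν] (hνμ : ν ≤ μ) {u : E → ℝ} (hu0 : 0 ≤ u)
    (hp : 1 ≤ p) (hu : Integrable (fun y ↦ u y ^ p) μ) (hs : 0 < s) (x : E) :
    ∫ z, u (x + s • z) ∂ν ≤
      s ^ (-(Module.finrank ℝ E / p)) * (∫ y, u y ^ p ∂μ) ^ p⁻¹ := by
  have hp0 : 0 < p := one_pos.trans_le hp
  have hup0 : 0 ≤ fun y ↦ u y ^ p := fun y ↦ Real.rpow_nonneg (hu0 y) p
  have hint : Integrable (fun z ↦ u (x + s • z) ^ p) μ :=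
    (hu.comp_add_left x).comp_smul (R := s) hs.ne'
  have hscale : ∫ z, u (x + s • z) ^ p ∂μ =
      (s ^ Module.finrank ℝ E)⁻¹ * ∫ y, u y ^ p ∂μ := by
    rw [Measure.integral_comp_smul_of_nonneg μ (fun y ↦ u (x + y) ^ p) s (hR := hs.le),
      integral_add_left_eq_self (fun y ↦ u y ^ p) x, smul_eq_mul]
  have hholder : ∫ z, u (x + s • z) ∂ν ≤ (∫ z, u (x + s • z) ^ p ∂ν) ^ p⁻¹ := by
    simpa [Real.rpow_rpow_inv (hu0 _) hp0.ne'] using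
      integral_rpow_mul_rpow_le (a := fun _ ↦ 1) (integrable_const 1) (hint.mono_measure hνμ)
        (fun _ ↦ zero_le_one) (fun z ↦ hup0 (x + s • z)) (inv_nonneg.2 hp0.le)
        (inv_le_one_of_one_le₀ hp)
  calc ∫ z, u (x + s • z) ∂ν ≤ (∫ z, u (x + s • z) ^ p ∂ν) ^ p⁻¹ := hholder
    _ ≤ (∫ z, u (x + s • z) ^ p ∂μ) ^ p⁻¹ := by
        have := integral_mono_measure hνμ (.of_forall fun z ↦ hup0 (x + s • z)) hint
        have : 0 ≤ ∫ z, u (x + s • z) ^ p ∂ν := integral_nonneg fun z ↦ hup0 (x + s • z)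
        gcongr
    _ = _ := by
        rw [hscale, Real.mul_rpow (by positivity) (integral_nonneg hup0), ← Real.rpow_natCast,
          ← Real.rpow_neg hs.le, ← Real.rpow_mul hs.le, neg_mul, div_eq_mul_inv]

lemma hasFDerivAt_dilateAverage [IsFiniteMeasure ν] (hψ : ContDiff ℝ 1 ψ)
    (hψc : HasCompactSupport ψ) (s : ℝ) (x : E) :
    HasFDerivAt (dilateAverage ν ψ s) (dilateAverage ν (fderiv ℝ ψ) s x) x := by
  have hD : Continuous (fderiv ℝ ψ) := hψ.continuous_fderiv one_ne_zero
  obtain ⟨M, hM⟩ := (hψc.fderiv ℝ).exists_bound_of_continuous hD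
  have hint := integrable_comp_add_smul (ν := ν) hψ.continuous hψc s
  refine hasFDerivAt_integral_of_dominated_of_fderiv_le (s := Set.univ) (bound := fun _ ↦ M)
    (F := fun x z ↦ ψ (x + s • z)) (F' := fun x z ↦ fderiv ℝ ψ (x + s • z)) Filter.univ_mem
    (.of_forall fun y ↦ (hint y).aestronglyMeasurable) (hint x)
    (integrable_comp_add_smul hD (hψc.fderiv ℝ) s x).aestronglyMeasurable
    (.of_forall fun z y _ ↦ hM _) (integrable_const _) (.of_forall fun z y _ ↦ ?_)
  exact (hasFDerivAt_comp_add_right _).2 (hψ.differentiable one_ne_zero _).hasFDerivAt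

lemma norm_fderiv_dilateAverage_le [IsProbabilityMeasure ν] (hνμ : ν ≤ μ) (hψ : ContDiff ℝ 1 ψ)
    (hψc : HasCompactSupport ψ) (hp : 1 ≤ p) (hs : 0 < s) (x : E) :
    ‖fderiv ℝ (dilateAverage ν ψ s) x‖ ≤
      s ^ (-(Module.finrank ℝ E / p)) * (∫ y, ‖fderiv ℝ ψ y‖ ^ p ∂μ) ^ p⁻¹ := by
  rw [(hasFDerivAt_dilateAverage hψ hψc s x).fderiv]
  exact (norm_integral_le_integral_norm _).trans <|
    integral_comp_add_smul_le hνμ (fun y ↦ norm_nonneg (fderiv ℝ ψ y)) hp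
      (integrable_norm_fderiv_rpow hψ hψc (one_pos.trans_le hp)) hs x

lemma dilateAverage_sub_eq_intervalIntegral [CompleteSpace F] [IsProbabilityMeasure ν]
    (hν : ∀ᵐ z ∂ν, ‖z‖ ≤ 1) (hψ : ContDiff ℝ 1 ψ) (hψc : HasCompactSupport ψ) (s : ℝ) (x : E) :
    dilateAverage ν ψ s x - ψ x = ∫ r in 0..s, ∫ z, fderiv ℝ ψ (x + r • z) z ∂ν := by
  have hD : Continuous (fderiv ℝ ψ) := hψ.continuous_fderiv one_ne_zero
  obtain ⟨M, hM⟩ := (hψc.fderiv ℝ).exists_bound_of_continuous hD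
  have hcont : Continuous fun q : ℝ × E ↦ fderiv ℝ ψ (x + q.1 • q.2) q.2 :=
    (hD.comp (by fun_prop)).clm_apply continuous_snd
  have hftc : ∀ z, ψ (x + s • z) - ψ x = ∫ r in 0..s, fderiv ℝ ψ (x + r • z) z := by
    intro z
    have hderiv : ∀ r, HasDerivAt (fun r : ℝ ↦ ψ (x + r • z)) (fderiv ℝ ψ (x + r • z) z) r :=
      fun r ↦ (hψ.differentiable one_ne_zero _).hasFDerivAt.comp_hasDerivAt r <| by
        simpa using ((hasDerivAt_id r).smul_const z).const_add x
    rw [intervalIntegral.integral_eq_sub_of_hasDerivAt (fun r _ ↦ hderiv r)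
      ((hcont.comp (by fun_prop : Continuous fun r : ℝ ↦ (r, z))).intervalIntegrable 0 s)]
    simp
  rw [intervalIntegral_integral_swap]
  · simp_rw [← hftc]
    rw [integral_sub (integrable_comp_add_smul hψ.continuous hψc s x) (integrable_const _),
      integral_const, probReal_univ, one_smul, dilateAverage]
  · have : IsFiniteMeasure (volume.restrict (Set.uIoc 0 s)) := by
      rw [Set.uIoc]; infer_instance
    refine .of_bound hcont.aestronglyMeasurable M ?_
    filter_upwards [Measure.quasiMeasurePreserving_snd.ae hν] with q hq
    exact ((fderiv ℝ ψ (x + q.1 • q.2)).le_of_opNorm_le_of_le (hM _) hq).trans_eq (mul_one M)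

lemma norm_dilateAverage_sub_le [CompleteSpace F] [IsProbabilityMeasure ν] (hνμ : ν ≤ μ)
    (hν : ∀ᵐ z ∂ν, ‖z‖ ≤ 1) (hψ : ContDiff ℝ 1 ψ) (hψc : HasCompactSupport ψ) (hp : 1 ≤ p)
    (hEp : Module.finrank ℝ E < p) (hs : 0 < s) (x : E) :
    ‖dilateAverage ν ψ s x - ψ x‖ ≤ (1 - Module.finrank ℝ E / p)⁻¹ *
      s ^ (1 - Module.finrank ℝ E / p) * (∫ y, ‖fderiv ℝ ψ y‖ ^ p ∂μ) ^ p⁻¹ := by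
  have hγ : 0 < 1 - Module.finrank ℝ E / p :=
    sub_pos.2 ((div_lt_one (one_pos.trans_le hp)).2 hEp)
  have hexp : -1 < -(Module.finrank ℝ E / p) := by linarith
  set A := (∫ y, ‖fderiv ℝ ψ y‖ ^ p ∂μ) ^ p⁻¹
  have hbound : ∀ r, 0 < r →
      ‖∫ z, fderiv ℝ ψ (x + r • z) z ∂ν‖ ≤ r ^ (-(Module.finrank ℝ E / p)) * A := by
    intro r hr
    refine (norm_integral_le_of_norm_le ?_ ?_).trans (integral_comp_add_smul_le hνμ
      (fun y ↦ norm_nonneg (fderiv ℝ ψ y)) hp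
      (integrable_norm_fderiv_rpow hψ hψc (one_pos.trans_le hp)) hr x)
    · exact (integrable_comp_add_smul (hψ.continuous_fderiv one_ne_zero) (hψc.fderiv ℝ) r x).norm
    · filter_upwards [hν] with z hz
      exact ((fderiv ℝ ψ (x + r • z)).le_opNorm z).trans
        (mul_le_of_le_one_right (norm_nonneg _) hz)
  rw [dilateAverage_sub_eq_intervalIntegral hν hψ hψc]
  calc _ ≤ ∫ r in 0..s, r ^ (-(Module.finrank ℝ E / p)) * A :=
        intervalIntegral.norm_integral_le_of_norm_le hs.le
          (.of_forall fun r hr ↦ hbound r hr.1)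
          ((intervalIntegral.intervalIntegrable_rpow' hexp).mul_const A)
    _ = _ := by
        rw [intervalIntegral.integral_mul_const, integral_rpow (.inl hexp),
          neg_add_eq_sub, Real.zero_rpow hγ.ne', sub_zero, div_eq_inv_mul]

lemma abs_integral_mul_le_add_of_fderiv_bound [IsProbabilityMeasure ν] (hνμ : ν ≤ μ)
    (hν : ∀ᵐ z ∂ν, ‖z‖ ≤ 1) {h : E → ℝ} (hh : Integrable h μ) {B : ℝ}
    (hB : ∀ χ : E → ℝ, Differentiable ℝ χ → ∀ K, (∀ x, ‖fderiv ℝ χ x‖ ≤ K) →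
      |∫ x, h x * χ x ∂μ| ≤ K * B)
    {ψ : E → ℝ} (hψ : ContDiff ℝ 1 ψ) (hψc : HasCompactSupport ψ) (hp : 1 ≤ p)
    (hEp : Module.finrank ℝ E < p) (hs : 0 < s) :
    |∫ x, h x * ψ x ∂μ| ≤
      (∫ x, |h x| ∂μ) * ((1 - Module.finrank ℝ E / p)⁻¹ * s ^ (1 - Module.finrank ℝ E / p) *
        (∫ y, ‖fderiv ℝ ψ y‖ ^ p ∂μ) ^ p⁻¹) +
      s ^ (-(Module.finrank ℝ E / p)) * (∫ y, ‖fderiv ℝ ψ y‖ ^ p ∂μ) ^ p⁻¹ * B := by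
  set χ := dilateAverage ν ψ s
  have hχ : Differentiable ℝ χ := fun x ↦
    (hasFDerivAt_dilateAverage hψ hψc s x).differentiableAt
  have hχψ := norm_dilateAverage_sub_le hνμ hν hψ hψc hp hEp hs
  obtain ⟨M, hM⟩ := hψc.exists_bound_of_continuous hψ.continuous
  have hint : Integrable (fun x ↦ h x * ψ x) μ :=
    hh.mul_bdd hψ.continuous.aestronglyMeasurable (.of_forall hM)
  have hint' : Integrable (fun x ↦ h x * (χ x - ψ x)) μ :=
    hh.mul_bdd (hχ.continuous.sub hψ.continuous).aestronglyMeasurable (.of_forall hχψ)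
  have hsplit : ∫ x, h x * ψ x ∂μ = (∫ x, h x * χ x ∂μ) - ∫ x, h x * (χ x - ψ x) ∂μ := by
    rw [eq_sub_iff_add_eq, ← integral_add hint hint']
    exact integral_congr_ae (.of_forall fun x ↦ by ring)
  have hremainder := norm_integral_le_of_norm_le (hh.abs.mul_const _)
    (.of_forall fun x ↦ (norm_mul_le (h x) (χ x - ψ x)).trans
      (mul_le_mul_of_nonneg_left (hχψ x) (norm_nonneg _)))
  rw [integral_mul_const] at hremainder
  rw [hsplit, add_comm]
  exact (abs_sub _ _).trans
    (add_le_add (hB χ hχ _ (norm_fderiv_dilateAverage_le hνμ hψ hψc hp hs)) hremainder)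

lemma abs_integral_mul_le_rpow_mul_rpow_of_fderiv_bound [IsProbabilityMeasure ν] (hνμ : ν ≤ μ)
    (hν : ∀ᵐ z ∂ν, ‖z‖ ≤ 1) {h : E → ℝ} (hh : Integrable h μ) {B : ℝ}
    (hB : ∀ χ : E → ℝ, Differentiable ℝ χ → ∀ K, (∀ x, ‖fderiv ℝ χ x‖ ≤ K) →
      |∫ x, h x * χ x ∂μ| ≤ K * B)
    {ψ : E → ℝ} (hψ : ContDiff ℝ 1 ψ) (hψc : HasCompactSupport ψ) (hp : 1 ≤ p)
    (hEp : Module.finrank ℝ E < p) :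
    |∫ x, h x * ψ x ∂μ| ≤ ((1 - Module.finrank ℝ E / p)⁻¹ + 1) *
      (∫ y, ‖fderiv ℝ ψ y‖ ^ p ∂μ) ^ p⁻¹ *
      ((∫ x, |h x| ∂μ) ^ (Module.finrank ℝ E / p) * B ^ (1 - Module.finrank ℝ E / p)) := by
  have hp0 : 0 < p := one_pos.trans_le hp
  set θ := 1 - Module.finrank ℝ E / p with hθ
  have hθ0 : 0 < θ := sub_pos.2 ((div_lt_one hp0).2 hEp)
  have hθ1 : θ ≤ 1 := sub_le_self 1 (by positivity)
  have hB0 : 0 ≤ B := by simpa using hB (fun _ ↦ 0) (differentiable_const 0) 1 (by simp)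
  set A := (∫ y, ‖fderiv ℝ ψ y‖ ^ p ∂μ) ^ p⁻¹
  have hA0 : 0 ≤ A := Real.rpow_nonneg (integral_nonneg fun y ↦ by positivity) _
  have hscale : ∀ ε, 0 < ε → |∫ x, h x * ψ x ∂μ| ≤
      θ⁻¹ * A * ((∫ x, |h x| ∂μ) * ε ^ θ) + A * (B * ε ^ (θ - 1)) := fun ε hε ↦
    (abs_integral_mul_le_add_of_fderiv_bound hνμ hν hh hB hψ hψc hp hEp hε).trans_eq <| by
      rw [← hθ, ← sub_sub_cancel_left 1 (Module.finrank ℝ E / p), ← hθ]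
      ring
  convert le_rpow_mul_rpow_of_forall_le (integral_nonneg fun x ↦ abs_nonneg (h x)) hB0
    (by positivity) hA0 hθ0.le hθ1 hscale using 2
  · ring
  · rw [hθ, sub_sub_cancel]

end DilateAverage

section Slices

variable {m : ℕ} (i : Fin (m + 1))

/-- The linear isometry of `ℝᵐ` onto the coordinate hyperplane `xᵢ = 0` of `ℝᵐ⁺¹`. It is the
derivative of the parametrisation `y ↦ i.insertNth t y` of the hyperplane `xᵢ = t`. -/
def faceInclusion : (Fin m → ℝ) →ₗᵢ[ℝ] (Fin (m + 1) → ℝ) where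
  toFun y := i.insertNth 0 y
  map_add' y z := by rw [← Fin.insertNth_add, add_zero]
  map_smul' c y := funext <| i.forall_iff_succAbove.2 ⟨by simp, by simp⟩
  norm_map' y := by
    simpa using i.dist_insertNth_insertNth (α := fun _ ↦ ℝ) 0 0 y 0

lemma faceInclusion_single (k : Fin m) :
    faceInclusion i (Pi.single k 1) = Pi.single (i.succAbove k) 1 := by
  refine funext <| i.forall_iff_succAbove.2 ⟨?_, fun j ↦ ?_⟩ <;>
    simp [faceInclusion, Pi.single_apply]

lemma insertNth_eq_add_faceInclusion (t : ℝ) (y : Fin m → ℝ) :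
    i.insertNth t y = Pi.single i t + faceInclusion i y := by
  change _ = _ + (i.insertNth 0 y : Fin (m + 1) → ℝ)
  rw [← Fin.insertNth_zero_right, ← Fin.insertNth_add, add_zero, zero_add]

lemma isClosedEmbedding_insertNth_right (t : ℝ) :
    Topology.IsClosedEmbedding fun y : Fin m → ℝ ↦ (i.insertNth t y : Fin (m + 1) → ℝ) :=
  Isometry.isClosedEmbedding <| .of_dist_eq fun y z ↦ by simp [Fin.dist_insertNth_insertNth]

lemma isClosedEmbedding_insertNth_left (y : Fin m → ℝ) :
    Topology.IsClosedEmbedding fun t : ℝ ↦ (i.insertNth t y : Fin (m + 1) → ℝ) :=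
  Isometry.isClosedEmbedding <| .of_dist_eq fun s t ↦ by simp [Fin.dist_insertNth_insertNth]

lemma contDiff_insertNth {k : WithTop ℕ∞} :
    ContDiff ℝ k fun q : ℝ × (Fin m → ℝ) ↦ (i.insertNth q.1 q.2 : Fin (m + 1) → ℝ) := by
  simp only [insertNth_eq_add_faceInclusion]
  exact ((ContinuousLinearMap.single ℝ (fun _ ↦ ℝ) i).contDiff.comp contDiff_fst).add
    ((faceInclusion i).contDiff.comp contDiff_snd)

lemma hasFDerivAt_insertNth_right (t : ℝ) (y : Fin m → ℝ) :
    HasFDerivAt (fun y ↦ (i.insertNth t y : Fin (m + 1) → ℝ))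
      (faceInclusion i).toContinuousLinearMap y := by
  simp only [insertNth_eq_add_faceInclusion]
  exact (faceInclusion i).toContinuousLinearMap.hasFDerivAt.const_add _

lemma hasDerivAt_insertNth_left (t : ℝ) (y : Fin m → ℝ) :
    HasDerivAt (fun t ↦ (i.insertNth t y : Fin (m + 1) → ℝ)) (Pi.single i 1) t := by
  simp only [insertNth_eq_add_faceInclusion]
  exact ((ContinuousLinearMap.single ℝ (fun _ ↦ ℝ) i).hasDerivAt (x := t)).add_const _

section Derivatives

variable {F : Type*} [NormedAddCommGroup F] [NormedSpace ℝ F] {g : (Fin (m + 1) → ℝ) → F}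

lemma fderiv_comp_insertNth (hg : Differentiable ℝ g) (t : ℝ) (y : Fin m → ℝ) :
    fderiv ℝ (fun y ↦ g (i.insertNth t y)) y =
      (fderiv ℝ g (i.insertNth t y)).comp (faceInclusion i).toContinuousLinearMap :=
  ((hg _).hasFDerivAt.comp y (hasFDerivAt_insertNth_right i t y)).fderiv

lemma norm_fderiv_comp_insertNth_le (hg : Differentiable ℝ g) (t : ℝ) (y : Fin m → ℝ) :
    ‖fderiv ℝ (fun y ↦ g (i.insertNth t y)) y‖ ≤ ‖fderiv ℝ g (i.insertNth t y)‖ := by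
  rw [fderiv_comp_insertNth i hg]
  exact (ContinuousLinearMap.opNorm_comp_le _ _).trans
    (mul_le_of_le_one_right (norm_nonneg _) (faceInclusion i).norm_toContinuousLinearMap_le)

lemma integral_Iic_fderiv_insertNth [CompleteSpace F] (hg : ContDiff ℝ 1 g)
    (hgc : HasCompactSupport g) (t : ℝ) (y : Fin m → ℝ) :
    ∫ s in Set.Iic t, fderiv ℝ g (i.insertNth s y) (Pi.single i 1) = g (i.insertNth t y) := by
  have hderiv : ∀ s, deriv (fun s ↦ g (i.insertNth s y)) s =
      fderiv ℝ g (i.insertNth s y) (Pi.single i 1) := fun s ↦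
    ((hg.differentiable one_ne_zero _).hasFDerivAt.comp_hasDerivAt s
      (hasDerivAt_insertNth_left i s y)).deriv
  simp_rw [← hderiv]
  exact HasCompactSupport.integral_Iic_deriv_eq
    (hg.comp ((contDiff_insertNth i).comp (contDiff_prodMk_left y)))
    (hgc.comp_isClosedEmbedding (isClosedEmbedding_insertNth_left i y)) t

end Derivatives

section Fubini

variable {F : Type*} [NormedAddCommGroup F] {g : (Fin (m + 1) → ℝ) → F}

lemma integrable_comp_insertNth_right (hg : Continuous g) (hgc : HasCompactSupport g) (t : ℝ) :
    Integrable fun y : Fin m → ℝ ↦ g (i.insertNth t y) :=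
  (hg.comp (isClosedEmbedding_insertNth_right i t).continuous).integrable_of_hasCompactSupport
    (hgc.comp_isClosedEmbedding (isClosedEmbedding_insertNth_right i t))

lemma measurePreserving_insertNth :
    MeasurePreserving fun q : ℝ × (Fin m → ℝ) ↦ (i.insertNth q.1 q.2 : Fin (m + 1) → ℝ) :=
  (volume_preserving_piFinSuccAbove (fun _ ↦ ℝ) i).symm

lemma integrable_comp_insertNth (hg : Integrable g) :
    Integrable fun q : ℝ × (Fin m → ℝ) ↦ g (i.insertNth q.1 q.2) :=
  (measurePreserving_insertNth i).integrable_comp_of_integrable hg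

variable [NormedSpace ℝ F]

lemma integral_norm_fderiv_comp_insertNth_rpow_le (hg : ContDiff ℝ 1 g)
    (hgc : HasCompactSupport g) {p : ℝ} (hp : 0 < p) (t : ℝ) :
    ∫ y, ‖fderiv ℝ (fun y ↦ g (i.insertNth t y)) y‖ ^ p ≤
      ∫ y, ‖fderiv ℝ g (i.insertNth t y)‖ ^ p :=
  integral_mono_of_nonneg (.of_forall fun y ↦ by positivity)
    (integrable_comp_insertNth_right i (continuous_norm_fderiv_rpow hg hp.le)
      (hasCompactSupport_norm_fderiv_rpow hgc hp.ne') t)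
    (.of_forall fun y ↦ Real.rpow_le_rpow (norm_nonneg _)
      (norm_fderiv_comp_insertNth_le i (hg.differentiable one_ne_zero) t y) hp.le)

lemma integrable_integral_insertNth (hg : Integrable g) :
    Integrable fun t ↦ ∫ y, g (i.insertNth t y) :=
  (integrable_comp_insertNth i hg).integral_prod_left

lemma integral_integral_insertNth (hg : Integrable g) :
    ∫ t, ∫ y, g (i.insertNth t y) = ∫ x, g x := by
  rw [← integral_prod _ (integrable_comp_insertNth i hg)]
  exact (measurePreserving_insertNth i).integral_comp
    (MeasurableEquiv.piFinSuccAbove (fun _ ↦ ℝ) i).symm.measurableEmbedding g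

end Fubini

end Slices

lemma hasCompactSupport_apply {X ι : Type*} [TopologicalSpace X] {f : X → ι → ℝ}
    (hfc : HasCompactSupport f) (i : ι) : HasCompactSupport fun x ↦ f x i :=
  hfc.comp_left (g := fun v : ι → ℝ ↦ v i) rfl

lemma fderiv_coord_apply {E ι : Type*} [NormedAddCommGroup E] [NormedSpace ℝ E]
    {f : E → ι → ℝ} {x : E} (hf : DifferentiableAt ℝ f x) (i : ι) (v : E) :
    fderiv ℝ (fun x ↦ f x i) x v = fderiv ℝ f x v i := by
  rw [fderiv_apply hf]
  rfl

lemma norm_fderiv_coord_le {E ι : Type*} [NormedAddCommGroup E] [NormedSpace ℝ E] [Fintype ι]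
    {f : E → ι → ℝ} {x : E} (hf : DifferentiableAt ℝ f x) (i : ι) :
    ‖fderiv ℝ (fun x ↦ f x i) x‖ ≤ ‖fderiv ℝ f x‖ := by
  refine ContinuousLinearMap.opNorm_le_bound _ (norm_nonneg _) fun v ↦ ?_
  rw [fderiv_coord_apply hf]
  exact (norm_le_pi_norm _ i).trans ((fderiv ℝ f x).le_opNorm v)

lemma integrable_mul_fderiv_apply {E : Type*} [NormedAddCommGroup E] [NormedSpace ℝ E]
    [MeasurableSpace E] [OpensMeasurableSpace E] {μ : Measure E} {g χ : E → ℝ}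
    (hg : Integrable g μ) {K : ℝ} (hK : ∀ x, ‖fderiv ℝ χ x‖ ≤ K) (v : E) :
    Integrable (fun x ↦ g x * fderiv ℝ χ x v) μ :=
  hg.mul_bdd (measurable_fderiv_apply_const ℝ χ v).aestronglyMeasurable
    (.of_forall fun x ↦ (fderiv ℝ χ x).le_of_opNorm_le (hK x) v)

section Divergence

variable {ι : Type*} [Fintype ι] [DecidableEq ι]

/-- The divergence `∑ᵢ ∂ᵢfᵢ` of a vector field on `ℝⁿ`, with the coordinates indexed by `ι`. -/
noncomputable def divergence (f : (ι → ℝ) → ι → ℝ) (x : ι → ℝ) : ℝ :=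
  ∑ i, fderiv ℝ f x (Pi.single i 1) i

lemma integral_fderiv_apply_eq_neg_integral_divergence_mul {G : (ι → ℝ) → ι → ℝ}
    (hG : ContDiff ℝ 1 G) (hGc : HasCompactSupport G) {χ : (ι → ℝ) → ℝ}
    (hχ : Differentiable ℝ χ) {K : ℝ} (hK : ∀ x, ‖fderiv ℝ χ x‖ ≤ K) :
    ∫ x, fderiv ℝ χ x (G x) = -∫ x, divergence G x * χ x := by
  have hGk (k : ι) : ContDiff ℝ 1 fun x ↦ G x k := contDiff_pi.1 hG k
  have hGkc (k : ι) := hasCompactSupport_apply hGc k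
  have hDGk (k : ι) (x : ι → ℝ) :
      fderiv ℝ G x (Pi.single k 1) k = fderiv ℝ (fun x ↦ G x k) x (Pi.single k 1) :=
    (fderiv_coord_apply (hG.differentiable one_ne_zero x) k _).symm
  have hint (k : ι) := integrable_mul_fderiv_apply
    ((hGk k).continuous.integrable_of_hasCompactSupport (μ := volume) (hGkc k)) hK (Pi.single k 1)
  have hint' (k : ι) :
      Integrable fun x ↦ fderiv ℝ (fun x ↦ G x k) x (Pi.single k 1) * χ x :=
    ((((hGk k).continuous_fderiv one_ne_zero).clm_apply continuous_const).mul
      hχ.continuous).integrable_of_hasCompactSupport ((hGkc k).fderiv_apply ℝ _).mul_right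
  have hparts (k : ι) := integral_mul_fderiv_eq_neg_fderiv_mul_of_integrable (hint' k) (hint k)
    (((hGk k).continuous.mul hχ.continuous).integrable_of_hasCompactSupport (hGkc k).mul_right)
    (fun x _ ↦ (hGk k).differentiable one_ne_zero x) (fun x _ ↦ hχ x)
  calc ∫ x, fderiv ℝ χ x (G x) = ∫ x, ∑ k, G x k * fderiv ℝ χ x (Pi.single k 1) := by
        refine integral_congr_ae (.of_forall fun x ↦ ?_)
        simpa only [map_sum, map_smul, smul_eq_mul] using
          congrArg (fderiv ℝ χ x) (pi_eq_sum_univ' (G x))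
    _ = -∫ x, divergence G x * χ x := by
        simp only [divergence, hDGk, Finset.sum_mul]
        rw [integral_finsetSum _ fun k _ ↦ hint k, integral_finsetSum _ fun k _ ↦ hint' k,
          ← Finset.sum_neg_distrib]
        exact Finset.sum_congr rfl fun k _ ↦ hparts k

end Divergence

section DivergenceFree

variable {m : ℕ} (i : Fin (m + 1)) {f : (Fin (m + 1) → ℝ) → Fin (m + 1) → ℝ}

lemma divergence_removeNth_comp_insertNth (hf : Differentiable ℝ f)
    (hdiv : ∀ x, divergence f x = 0) (s : ℝ) (y : Fin m → ℝ) :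
    divergence (fun y ↦ i.removeNth (f (i.insertNth s y))) y =
      -fderiv ℝ f (i.insertNth s y) (Pi.single i 1) i := by
  have hslice : ∀ k, fderiv ℝ (fun y ↦ i.removeNth (f (i.insertNth s y))) y (Pi.single k 1) k =
      fderiv ℝ f (i.insertNth s y) (Pi.single (i.succAbove k) 1) (i.succAbove k) := by
    intro k
    have hD := (hf (i.insertNth s y)).hasFDerivAt.comp y (hasFDerivAt_insertNth_right i s y)
    have hD' : HasFDerivAt (fun y ↦ i.removeNth (f (i.insertNth s y))) (ContinuousLinearMap.pi
        fun j ↦ (ContinuousLinearMap.proj (i.succAbove j)).comp ((fderiv ℝ f (i.insertNth s y)).comp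
          (faceInclusion i).toContinuousLinearMap)) y :=
      hasFDerivAt_pi.2 fun j ↦ hasFDerivAt_pi'.1 hD (i.succAbove j)
    rw [hD'.fderiv]
    simp [faceInclusion_single]
  have h := hdiv (i.insertNth s y)
  rw [divergence, Fin.sum_univ_succAbove _ i] at h
  rw [divergence, Finset.sum_congr rfl fun k _ ↦ hslice k, eq_neg_iff_add_eq_zero, add_comm, h]

lemma integral_slice_fderiv_mul_eq (hf : ContDiff ℝ 1 f) (hfc : HasCompactSupport f)
    (hdiv : ∀ x, divergence f x = 0) {χ : (Fin m → ℝ) → ℝ} (hχ : Differentiable ℝ χ) {K : ℝ}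
    (hK : ∀ y, ‖fderiv ℝ χ y‖ ≤ K) (s : ℝ) :
    ∫ y, fderiv ℝ f (i.insertNth s y) (Pi.single i 1) i * χ y =
      ∫ y, fderiv ℝ χ y (i.removeNth (f (i.insertNth s y))) := by
  have hG : ContDiff ℝ 1 fun y ↦ i.removeNth (f (i.insertNth s y)) := contDiff_pi.2 fun k ↦
    contDiff_pi.1 (hf.comp ((contDiff_insertNth i).comp (contDiff_prodMk_right s))) (i.succAbove k)
  have hGc : HasCompactSupport fun y ↦ i.removeNth (f (i.insertNth s y)) :=
    (hfc.comp_isClosedEmbedding (isClosedEmbedding_insertNth_right i s)).comp_left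
      (g := i.removeNth) rfl
  rw [integral_fderiv_apply_eq_neg_integral_divergence_mul hG hGc hχ hK]
  simp only [divergence_removeNth_comp_insertNth i (hf.differentiable one_ne_zero) hdiv, neg_mul,
    integral_neg, neg_neg]

lemma integral_slice_mul_eq_integral_Iic (hf : ContDiff ℝ 1 f) (hfc : HasCompactSupport f)
    (hdiv : ∀ x, divergence f x = 0) {χ : (Fin m → ℝ) → ℝ} (hχ : Differentiable ℝ χ) {K : ℝ}
    (hK : ∀ y, ‖fderiv ℝ χ y‖ ≤ K) (t : ℝ) :
    ∫ y, f (i.insertNth t y) i * χ y =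
      ∫ s in Set.Iic t, ∫ y, fderiv ℝ χ y (i.removeNth (f (i.insertNth s y))) := by
  have hfi : ContDiff ℝ 1 fun x ↦ f x i := contDiff_pi.1 hf i
  have hfic := hasCompactSupport_apply hfc i
  have hDfi (x) := fderiv_coord_apply (hf.differentiable one_ne_zero x) i (Pi.single i 1)
  have hcont : Continuous fun x ↦ fderiv ℝ f x (Pi.single i 1) i * χ (i.removeNth x) := by
    have := hf.continuous_fderiv one_ne_zero
    have := hχ.continuous
    unfold Fin.removeNth
    fun_prop
  have hint : Integrable fun x ↦ fderiv ℝ f x (Pi.single i 1) i * χ (i.removeNth x) :=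
    hcont.integrable_of_hasCompactSupport
      (hasCompactSupport_apply (hfc.fderiv_apply ℝ (Pi.single i 1)) i).mul_right
  have hint' : Integrable (fun q : (Fin m → ℝ) × ℝ ↦
      fderiv ℝ f (i.insertNth q.2 q.1) (Pi.single i 1) i * χ q.1)
      (volume.prod (volume.restrict (Set.Iic t))) := by
    simpa [Function.comp_def] using (integrable_comp_insertNth i hint).swap.mono_measure
      (Measure.prod_mono le_rfl Measure.restrict_le_self)
  calc ∫ y, f (i.insertNth t y) i * χ y
      = ∫ y, ∫ s in Set.Iic t, fderiv ℝ f (i.insertNth s y) (Pi.single i 1) i * χ y := by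
        simp_rw [integral_mul_const, ← hDfi, integral_Iic_fderiv_insertNth i hfi hfic]
    _ = ∫ s in Set.Iic t, ∫ y, fderiv ℝ f (i.insertNth s y) (Pi.single i 1) i * χ y :=
        integral_integral_swap hint'
    _ = _ := by simp_rw [integral_slice_fderiv_mul_eq i hf hfc hdiv hχ hK]

lemma abs_integral_slice_mul_le (hf : ContDiff ℝ 1 f) (hfc : HasCompactSupport f)
    (hdiv : ∀ x, divergence f x = 0) {χ : (Fin m → ℝ) → ℝ} (hχ : Differentiable ℝ χ) {K : ℝ}
    (hK : ∀ y, ‖fderiv ℝ χ y‖ ≤ K) (t : ℝ) :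
    |∫ y, f (i.insertNth t y) i * χ y| ≤ K * ∫ x, ‖f x‖ := by
  have hnorm : Integrable fun x ↦ ‖f x‖ :=
    hf.continuous.norm.integrable_of_hasCompactSupport hfc.norm
  have hint : Integrable fun s ↦ K * ∫ y, ‖f (i.insertNth s y)‖ :=
    (integrable_integral_insertNth i hnorm).const_mul K
  have hslice (s : ℝ) : ‖∫ y, fderiv ℝ χ y (i.removeNth (f (i.insertNth s y)))‖ ≤
      K * ∫ y, ‖f (i.insertNth s y)‖ := by
    rw [← integral_const_mul]
    exact norm_integral_le_of_norm_le
      ((integrable_comp_insertNth_right i hf.continuous.norm hfc.norm s).const_mul K)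
      (.of_forall fun y ↦ (fderiv ℝ χ y).le_of_opNorm_le_of_le (hK y) <|
        (pi_norm_le_iff_of_nonneg (norm_nonneg _)).2 fun k ↦ norm_le_pi_norm _ (i.succAbove k))
  calc |∫ y, f (i.insertNth t y) i * χ y|
      = ‖∫ s in Set.Iic t, ∫ y, fderiv ℝ χ y (i.removeNth (f (i.insertNth s y)))‖ := by
        rw [integral_slice_mul_eq_integral_Iic i hf hfc hdiv hχ hK, Real.norm_eq_abs]
    _ ≤ ∫ s in Set.Iic t, K * ∫ y, ‖f (i.insertNth s y)‖ :=
        norm_integral_le_of_norm_le hint.integrableOn (.of_forall hslice)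
    _ ≤ ∫ s, K * ∫ y, ‖f (i.insertNth s y)‖ :=
        setIntegral_le_integral hint (.of_forall fun s ↦ (norm_nonneg _).trans (hslice s))
    _ = K * ∫ x, ‖f x‖ := by
        rw [integral_const_mul, integral_integral_insertNth i hnorm]

end DivergenceFree

section SliceEstimate

variable {m : ℕ}

lemma ae_norm_le_one_restrict_Icc :
    ∀ᵐ z ∂(volume.restrict (Set.Icc (0 : Fin m → ℝ) 1)), ‖z‖ ≤ 1 := by
  filter_upwards [ae_restrict_mem measurableSet_Icc] with z hz
  exact (pi_norm_le_iff_of_nonneg zero_le_one).2 fun k ↦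
    (Real.norm_of_nonneg (hz.1 k)).trans_le (hz.2 k)

lemma isProbabilityMeasure_restrict_Icc :
    IsProbabilityMeasure (volume.restrict (Set.Icc (0 : Fin m → ℝ) 1)) :=
  ⟨by simp [Real.volume_Icc_pi]⟩

variable (i : Fin (m + 1)) {f : (Fin (m + 1) → ℝ) → Fin (m + 1) → ℝ}
  {h : (Fin (m + 1) → ℝ) → ℝ}

lemma abs_integral_slice_mul_slice_le (hf : ContDiff ℝ 1 f) (hfc : HasCompactSupport f)
    (hdiv : ∀ x, divergence f x = 0) (hh : ContDiff ℝ 1 h) (hhc : HasCompactSupport h)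
    (t : ℝ) :
    |∫ y, f (i.insertNth t y) i * h (i.insertNth t y)| ≤
      (m + 2) * (∫ x, ‖f x‖) ^ (m + 1 : ℝ)⁻¹ *
        ((∫ y, ‖f (i.insertNth t y)‖) ^ (1 - (m + 1 : ℝ)⁻¹) *
          (∫ y, ‖fderiv ℝ h (i.insertNth t y)‖ ^ (m + 1 : ℝ)) ^ (m + 1 : ℝ)⁻¹) := by
  have hm : (0 : ℝ) < m + 1 := by positivity
  have hγ : 1 - (m + 1 : ℝ)⁻¹ = m / (m + 1) := by field_simp; ring
  have hγ0 : 0 ≤ 1 - (m + 1 : ℝ)⁻¹ := hγ ▸ by positivity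
  have hconst : (1 - m / (m + 1) : ℝ)⁻¹ + 1 = m + 2 := by rw [← hγ, sub_sub_cancel, inv_inv]; ring
  have hfi := integrable_comp_insertNth_right i (contDiff_pi.1 hf i).continuous
    (hasCompactSupport_apply hfc i) t
  have hψ : ContDiff ℝ 1 fun y ↦ h (i.insertNth t y) :=
    hh.comp ((contDiff_insertNth i).comp (contDiff_prodMk_right t))
  have hψc : HasCompactSupport fun y ↦ h (i.insertNth t y) :=
    hhc.comp_isClosedEmbedding (isClosedEmbedding_insertNth_right i t)
  have := isProbabilityMeasure_restrict_Icc (m := m)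
  have hslice := abs_integral_mul_le_rpow_mul_rpow_of_fderiv_bound (p := m + 1)
    (Measure.restrict_le_self (μ := volume)) ae_norm_le_one_restrict_Icc hfi
    (fun χ hχ K hK ↦ abs_integral_slice_mul_le i hf hfc hdiv hχ hK t) hψ hψc
    (by simp) (by simp)
  have hf_le : ∫ y, |f (i.insertNth t y) i| ≤ ∫ y, ‖f (i.insertNth t y)‖ :=
    integral_mono hfi.norm (integrable_comp_insertNth_right i hf.continuous.norm hfc.norm t)
      fun y ↦ norm_le_pi_norm (f (i.insertNth t y)) i
  have hh_le := integral_norm_fderiv_comp_insertNth_rpow_le i hh hhc hm t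
  simp only [Module.finrank_fintype_fun_eq_card, Fintype.card_fin, hconst] at hslice
  rw [← hγ, sub_sub_cancel] at hslice
  calc |∫ y, f (i.insertNth t y) i * h (i.insertNth t y)| ≤ _ := hslice
    _ ≤ (m + 2) * (∫ y, ‖fderiv ℝ h (i.insertNth t y)‖ ^ (m + 1 : ℝ)) ^ (m + 1 : ℝ)⁻¹ *
          ((∫ y, ‖f (i.insertNth t y)‖) ^ (1 - (m + 1 : ℝ)⁻¹) *
            (∫ x, ‖f x‖) ^ (m + 1 : ℝ)⁻¹) := by
        gcongr
    _ = _ := by ring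

lemma abs_integral_coord_mul_le (hf : ContDiff ℝ 1 f) (hfc : HasCompactSupport f)
    (hdiv : ∀ x, divergence f x = 0) (hh : ContDiff ℝ 1 h) (hhc : HasCompactSupport h) :
    |∫ x, f x i * h x| ≤
      (m + 2) * (∫ x, ‖f x‖) * (∫ x, ‖fderiv ℝ h x‖ ^ (m + 1 : ℝ)) ^ (m + 1 : ℝ)⁻¹ := by
  have hm : (0 : ℝ) < m + 1 := by positivity
  have hγ0 : 0 ≤ (m + 1 : ℝ)⁻¹ := by positivity
  have hγ1 : (m + 1 : ℝ)⁻¹ ≤ 1 := inv_le_one_of_one_le₀ (by simp)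
  have hfh : Integrable fun x ↦ f x i * h x :=
    ((contDiff_pi.1 hf i).continuous.mul hh.continuous).integrable_of_hasCompactSupport
      hhc.mul_left
  have hnorm : Integrable fun x ↦ ‖f x‖ :=
    hf.continuous.norm.integrable_of_hasCompactSupport hfc.norm
  have hDh : Integrable fun x ↦ ‖fderiv ℝ h x‖ ^ (m + 1 : ℝ) :=
    integrable_norm_fderiv_rpow hh hhc hm
  have ha := integrable_integral_insertNth i hnorm
  have hb := integrable_integral_insertNth i hDh
  have ha0 : 0 ≤ fun t ↦ ∫ y, ‖f (i.insertNth t y)‖ := fun t ↦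
    integral_nonneg fun y ↦ norm_nonneg _
  have hb0 : 0 ≤ fun t ↦ ∫ y, ‖fderiv ℝ h (i.insertNth t y)‖ ^ (m + 1 : ℝ) := fun t ↦
    integral_nonneg fun y ↦ by positivity
  have hF : 0 ≤ ∫ x, ‖f x‖ := integral_nonneg fun x ↦ norm_nonneg _
  calc |∫ x, f x i * h x|
      = ‖∫ t, ∫ y, f (i.insertNth t y) i * h (i.insertNth t y)‖ := by
        rw [integral_integral_insertNth i hfh, Real.norm_eq_abs]
    _ ≤ ∫ t, (m + 2) * (∫ x, ‖f x‖) ^ (m + 1 : ℝ)⁻¹ *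
          ((∫ y, ‖f (i.insertNth t y)‖) ^ (1 - (m + 1 : ℝ)⁻¹) *
            (∫ y, ‖fderiv ℝ h (i.insertNth t y)‖ ^ (m + 1 : ℝ)) ^ (m + 1 : ℝ)⁻¹) :=
        norm_integral_le_of_norm_le
          ((integrable_rpow_mul_rpow ha hb ha0 hb0 hγ0 hγ1).const_mul _)
          (.of_forall (abs_integral_slice_mul_slice_le i hf hfc hdiv hh hhc))
    _ ≤ (m + 2) * (∫ x, ‖f x‖) ^ (m + 1 : ℝ)⁻¹ * ((∫ x, ‖f x‖) ^ (1 - (m + 1 : ℝ)⁻¹) *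
          (∫ x, ‖fderiv ℝ h x‖ ^ (m + 1 : ℝ)) ^ (m + 1 : ℝ)⁻¹) := by
        rw [integral_const_mul, ← integral_integral_insertNth i hnorm,
          ← integral_integral_insertNth i hDh]
        exact mul_le_mul_of_nonneg_left (integral_rpow_mul_rpow_le ha hb ha0 hb0 hγ0 hγ1)
          (mul_nonneg (by positivity) (Real.rpow_nonneg (integral_nonneg ha0) _))
    _ = _ := by
        rw [mul_assoc, ← mul_assoc (_ ^ _), ← Real.rpow_add_of_nonneg hF hγ0 (sub_nonneg.2 hγ1),
          add_sub_cancel, Real.rpow_one, mul_assoc]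

end SliceEstimate

theorem stmt10_general {n : ℕ} {f φ : (Fin n → ℝ) → Fin n → ℝ} (hf : ContDiff ℝ 1 f)
    (hfc : HasCompactSupport f) (hdiv : ∀ x, divergence f x = 0) (hφ : ContDiff ℝ 1 φ)
    (hφc : HasCompactSupport φ) :
    |∫ x, ∑ i, f x i * φ x i| ≤
      n * (n + 1) * (∫ x, ‖f x‖) * (∫ x, ‖fderiv ℝ φ x‖ ^ (n : ℝ)) ^ (n : ℝ)⁻¹ := by
  obtain _ | m := n
  · simp
  push_cast
  have hm : (0 : ℝ) < m + 1 := by positivity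
  have hφi (i) : ContDiff ℝ 1 fun x ↦ φ x i := contDiff_pi.1 hφ i
  have hφic (i) := hasCompactSupport_apply hφc i
  have hint (i) : Integrable fun x ↦ f x i * φ x i :=
    ((contDiff_pi.1 hf i).continuous.mul (hφi i).continuous).integrable_of_hasCompactSupport
      (hφic i).mul_left
  have hcoord (i) : ∫ x, ‖fderiv ℝ (fun x ↦ φ x i) x‖ ^ (m + 1 : ℝ) ≤
      ∫ x, ‖fderiv ℝ φ x‖ ^ (m + 1 : ℝ) :=
    integral_mono (integrable_norm_fderiv_rpow (hφi i) (hφic i) hm)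
      (integrable_norm_fderiv_rpow hφ hφc hm) fun x ↦ Real.rpow_le_rpow (norm_nonneg _)
        (norm_fderiv_coord_le (hφ.differentiable one_ne_zero x) i) hm.le
  rw [integral_finsetSum _ fun i _ ↦ hint i]
  calc |∑ i, ∫ x, f x i * φ x i| ≤ ∑ i, |∫ x, f x i * φ x i| := Finset.abs_sum_le_sum_abs _ _
    _ ≤ ∑ _i : Fin (m + 1), (m + 2) * (∫ x, ‖f x‖) *
          (∫ x, ‖fderiv ℝ φ x‖ ^ (m + 1 : ℝ)) ^ (m + 1 : ℝ)⁻¹ := by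
        refine Finset.sum_le_sum fun i _ ↦
          (abs_integral_coord_mul_le i hf hfc hdiv (hφi i) (hφic i)).trans ?_
        have := hcoord i
        gcongr
    _ = _ := by
        rw [Finset.sum_const, Finset.card_univ, Fintype.card_fin, nsmul_eq_mul]
        push_cast
        ring

/-- Bourgain–Brezis estimate for divergence-free `L¹` vector fields:
for `n ≥ 2` there is `C > 0` such that for every `f ∈ C_c^∞(ℝⁿ; ℝⁿ)` with
`div f = 0` and every `φ ∈ C_c^∞(ℝⁿ; ℝⁿ)`,
`|∫ f · φ| ≤ C ‖f‖_{L¹} ‖Dφ‖_{Lⁿ}`. -/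
theorem stmt10 (n : ℕ) (hn : 2 ≤ n) :
    ∃ C : ℝ, 0 < C ∧
      ∀ f φ : (Fin n → ℝ) → (Fin n → ℝ),
        ContDiff ℝ (⊤ : ℕ∞) f → HasCompactSupport f →
        (∀ x, ∑ i, fderiv ℝ f x (Pi.single i 1) i = 0) →
        ContDiff ℝ (⊤ : ℕ∞) φ → HasCompactSupport φ →
        |∫ x, ∑ i, f x i * φ x i| ≤
          C * (∫ x, ‖f x‖) * (∫ x, ‖fderiv ℝ φ x‖ ^ (n : ℝ)) ^ ((n : ℝ)⁻¹) :=
  ⟨n * (n + 1), by positivity, fun _ _ hf hfc hdiv hφ hφc ↦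
    stmt10_general (hf.of_le (by exact_mod_cast le_top)) hfc hdiv
      (hφ.of_le (by exact_mod_cast le_top)) hφc⟩
end
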